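/- For any complex numbers z_1, ..., z_n with |z_1| ≥ |z_j| for all j, and any positive integer m, there exists an integer ν with m < ν ≤ m + n such that |z_1^ν + z_2^ν + ... + z_n^ν| ≥ |z_1|^ν · (n / (4e(m+n)))^n. -/

import Mathlib

open Polynomial in
/-- `p` is controlled by monomials of exponents in `[lo, hi)` with constant `c`. -/
def TBd (η : ℝ) (lo hi : ℕ) (c : ℝ) (p : ℂ[X]) : Prop :=
  ∀ φ : ℂ[X] →ₗ[ℂ] ℂ, (∀ ν, lo ≤ ν → ν < hi → ‖φ (X ^ ν)‖ ≤ η) → ‖φ p‖ ≤ c * η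

open Polynomial in
theorem TBd.mono {η : ℝ} {lo hi lo' hi' : ℕ} {c : ℝ} {p : ℂ[X]} (h : TBd η lo hi c p)
    (h1 : lo' ≤ lo) (h2 : hi ≤ hi') : TBd η lo' hi' c p :=
  fun φ hφ => h φ fun ν a b => hφ ν (h1.trans a) (b.trans_le h2)

open Polynomial in
theorem TBd.le {η : ℝ} (hη : 0 ≤ η) {lo hi : ℕ} {c c' : ℝ} {p : ℂ[X]} (h : TBd η lo hi c p)
    (h1 : c ≤ c') : TBd η lo hi c' p :=
  fun φ hφ => (h φ hφ).trans (mul_le_mul_of_nonneg_right h1 hη)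

open Polynomial in
theorem TBd.add {η : ℝ} {lo hi : ℕ} {c d : ℝ} {p q : ℂ[X]} (h : TBd η lo hi c p)
    (h' : TBd η lo hi d q) : TBd η lo hi (c + d) (p + q) := by
  intro φ hφ
  rw [map_add, add_mul]
  exact (norm_add_le _ _).trans (add_le_add (h φ hφ) (h' φ hφ))

open Polynomial in
theorem TBd.smul {η : ℝ} {lo hi : ℕ} {c : ℝ} {p : ℂ[X]} (a : ℂ) (h : TBd η lo hi c p) :
    TBd η lo hi (‖a‖ * c) (C a * p) := by
  intro φ hφ
  rw [← smul_eq_C_mul, map_smul, smul_eq_mul, norm_mul, mul_assoc]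
  exact mul_le_mul_of_nonneg_left (h φ hφ) (norm_nonneg _)

open Polynomial in
theorem TBd.mulX {η : ℝ} {lo hi : ℕ} {c : ℝ} {p : ℂ[X]} (h : TBd η lo hi c p) :
    TBd η (lo + 1) (hi + 1) c (X * p) := by
  intro φ hφ
  have := h (φ ∘ₗ LinearMap.mulLeft ℂ X) (by
    intro ν h1 h2
    simp only [LinearMap.comp_apply, LinearMap.mulLeft_apply]
    rw [← pow_succ']
    exact hφ _ (by omega) (by omega))
  simpa using this

open Polynomial in
theorem TBd.lin {η : ℝ} {lo hi : ℕ} {c : ℝ} {p : ℂ[X]} (a : ℂ) (h : TBd η lo hi c p) :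
    TBd η lo (hi + 1) ((1 + ‖a‖) * c) ((X - C a) * p) := by
  have h1 := (h.mulX.mono (Nat.le_succ lo) le_rfl).add ((h.smul (-a)).mono le_rfl (Nat.le_succ hi))
  convert h1 using 1
  · rw [norm_neg]; ring
  · rw [C_neg]; ring

open Polynomial in
theorem TBd.X {η : ℝ} : TBd η 1 2 1 (X : ℂ[X]) := by
  intro φ hφ
  simpa using hφ 1 le_rfl (by norm_num)

open Polynomial in
theorem TBd.zero {η : ℝ} {lo hi : ℕ} : TBd η lo hi 0 (0 : ℂ[X]) := by
  intro φ hφ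
  simp

/-- The majorant for large points. -/
noncomputable def GA (r : ℝ) (A : Multiset ℂ) : ℝ := (A.map fun a => (1 + ‖a‖) / (‖a‖ - r)).prod
/-- The majorant for small points. -/
noncomputable def GB (r : ℝ) (B : Multiset ℂ) : ℝ := (B.map fun b => (1 + ‖b‖) / (r - ‖b‖)).prod

theorem GA_nonneg {r : ℝ} {A : Multiset ℂ} (h : ∀ a ∈ A, r < ‖a‖) : 0 ≤ GA r A := by
  apply Multiset.prod_nonneg
  intro x hx
  obtain ⟨a, ha, rfl⟩ := Multiset.mem_map.1 hx
  have := h a ha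
  have := norm_nonneg a
  exact div_nonneg (by linarith) (by linarith)

theorem GB_nonneg {r : ℝ} {B : Multiset ℂ} (h : ∀ a ∈ B, ‖a‖ < r) : 0 ≤ GB r B := by
  apply Multiset.prod_nonneg
  intro x hx
  obtain ⟨a, ha, rfl⟩ := Multiset.mem_map.1 hx
  have := h a ha
  have := norm_nonneg a
  exact div_nonneg (by linarith) (by linarith)

open Polynomial in
theorem stage1 {η r : ℝ} (hη : 0 ≤ η) (hr : 0 < r) (A : Multiset ℂ) (hA : ∀ a ∈ A, r < ‖a‖) :
    ∃ p : ℂ[X], TBd η 1 (1 + A.card) (GA r A - 1) p ∧ ∀ a ∈ A, p.eval a = 1 := by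
  induction A using Multiset.induction with
  | empty => exact ⟨0, by simpa [GA] using TBd.zero, by simp⟩
  | cons a A ih =>
    obtain ⟨q, hq, hq1⟩ := ih fun x hx => hA x (Multiset.mem_cons_of_mem hx)
    have ha : r < ‖a‖ := hA a (Multiset.mem_cons_self _ _)
    have ha0 : a ≠ 0 := by
      rintro rfl
      rw [norm_zero] at ha
      linarith
    have hG : 0 ≤ GA r A := GA_nonneg fun x hx => hA x (Multiset.mem_cons_of_mem hx)
    refine ⟨C (-a⁻¹) * ((X - C a) * q) + C (a⁻¹) * X, ?_, ?_⟩
    · have h1 := ((hq.lin a).smul (-a⁻¹)).add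
        ((TBd.X.smul (a⁻¹)).mono (hi' := 1 + A.card + 1) le_rfl (by omega))
      have h2 := h1.mono (hi' := 1 + (a ::ₘ A).card) le_rfl (by simp <;> omega)
      refine h2.le hη ?_
      have e : GA r (a ::ₘ A) = (1 + ‖a‖) / (‖a‖ - r) * GA r A := by simp [GA]
      rw [e, norm_neg, norm_inv]
      have hp : 0 < ‖a‖ := by linarith
      have : ‖a‖⁻¹ * ((1 + ‖a‖) * (GA r A - 1)) + ‖a‖⁻¹ * 1 = (1 + ‖a‖) / ‖a‖ * GA r A - 1 := by
        field_simp
        ring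
      rw [this]
      have : (1 + ‖a‖) / ‖a‖ ≤ (1 + ‖a‖) / (‖a‖ - r) :=
        div_le_div_of_nonneg_left (by linarith) (by linarith) (by linarith)
      nlinarith [mul_le_mul_of_nonneg_right this hG]
    · intro x hx
      rcases Multiset.mem_cons.1 hx with rfl | hx
      · simp [ha0]
      · simp only [eval_add, eval_mul, eval_C, eval_sub, eval_X, hq1 x hx]
        field_simp
        ring

open Polynomial in
theorem stage2 {η r : ℝ} (hη : 0 ≤ η) (hr : 0 < r) (m : ℕ) (A : Multiset ℂ)
    (hA : ∀ a ∈ A, r < ‖a‖) :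
    ∃ p : ℂ[X], TBd η (m + 1) (m + 1 + A.card) (r⁻¹ ^ m * GA r A) p ∧ ∀ a ∈ A, p.eval a = 1 := by
  induction m generalizing A with
  | zero =>
    obtain ⟨p, hp, hp1⟩ := stage1 hη hr A hA
    exact ⟨p, by simpa using hp.le hη (by linarith), hp1⟩
  | succ m ihm =>
    induction A using Multiset.induction with
    | empty => exact ⟨0, TBd.zero.le hη (by simp [GA]; positivity), by simp⟩
    | cons a A ih =>
      obtain ⟨v, hv, hv1⟩ := ih fun x hx => hA x (Multiset.mem_cons_of_mem hx)
      obtain ⟨u, hu, hu1⟩ := ihm (a ::ₘ A) hA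
      have ha : r < ‖a‖ := hA a (Multiset.mem_cons_self _ _)
      have ha0 : a ≠ 0 := by
        rintro rfl
        rw [norm_zero] at ha
        linarith
      refine ⟨C (a⁻¹) * (X * u + C (-1) * ((X - C a) * v)), ?_, ?_⟩
      · have h1 := (hu.mulX.add (((hv.lin a).smul (-1)).mono
          (hi' := m + 1 + (a ::ₘ A).card + 1) le_rfl (by simp <;> omega))).smul (a⁻¹)
        have h2 := h1.mono (hi' := m + 1 + 1 + (a ::ₘ A).card) le_rfl (by omega)
        refine h2.le hη (le_of_eq ?_)
        have e : GA r (a ::ₘ A) = (1 + ‖a‖) / (‖a‖ - r) * GA r A := by simp [GA]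
        rw [e, norm_neg, norm_inv, norm_one]
        have hp : 0 < ‖a‖ := by linarith
        have hp' : ‖a‖ - r ≠ 0 := by linarith
        rw [pow_succ]
        field_simp
        ring
      · intro x hx
        have := hu1 x hx
        rcases Multiset.mem_cons.1 hx with rfl | hx
        · simp [ha0, this]
        · simp only [eval_add, eval_mul, eval_C, eval_sub, eval_X, hv1 x hx, this]
          field_simp
          ring

open Polynomial in
theorem stage3 {η r : ℝ} (hη : 0 ≤ η) (hr : 0 < r) (m : ℕ) (B A : Multiset ℂ)
    (hB : ∀ b ∈ B, ‖b‖ < r) (hA : ∀ a ∈ A, r < ‖a‖) :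
    ∃ p : ℂ[X], TBd η (m + 1) (m + 1 + A.card + B.card) (r⁻¹ ^ m * GA r A * GB r B) p ∧
      (∀ a ∈ A, p.eval a = 1) ∧ ∀ b ∈ B, p.eval b = 0 := by
  induction B using Multiset.induction generalizing A with
  | empty =>
    obtain ⟨p, hp, hp1⟩ := stage2 hη hr m A hA
    exact ⟨p, by simpa [GB] using hp, hp1, by simp⟩
  | cons b B ihB =>
    induction A using Multiset.induction with
    | empty =>
      have := GB_nonneg hB
      exact ⟨0, TBd.zero.le hη (by simp [GA]; positivity), by simp, by simp⟩
    | cons a A ih =>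
      obtain ⟨v, hv, hv1, hv0⟩ := ih fun x hx => hA x (Multiset.mem_cons_of_mem hx)
      obtain ⟨u, hu, hu1, hu0⟩ := ihB (a ::ₘ A) (fun x hx => hB x (Multiset.mem_cons_of_mem hx)) hA
      have ha : r < ‖a‖ := hA a (Multiset.mem_cons_self _ _)
      have hb : ‖b‖ < r := hB b (Multiset.mem_cons_self _ _)
      have hab : a - b ≠ 0 := by
        intro h
        rw [sub_eq_zero.1 h] at ha
        linarith
      refine ⟨C ((a - b)⁻¹) * ((X - C b) * u + C (-1) * ((X - C a) * v)), ?_, ?_, ?_⟩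
      · have h1 := ((hu.lin b).add (((hv.lin a).smul (-1)).mono
          (hi' := m + 1 + (a ::ₘ A).card + B.card + 1) le_rfl (by simp <;> omega))).smul ((a - b)⁻¹)
        have h2 := h1.mono (hi' := m + 1 + (a ::ₘ A).card + (b ::ₘ B).card) le_rfl (by simp <;> omega)
        refine h2.le hη ?_
        have eA : GA r (a ::ₘ A) = (1 + ‖a‖) / (‖a‖ - r) * GA r A := by simp [GA]
        have eB : GB r (b ::ₘ B) = (1 + ‖b‖) / (r - ‖b‖) * GB r B := by simp [GB]
        have hG : 0 ≤ r⁻¹ ^ m * GA r (a ::ₘ A) * GB r (b ::ₘ B) :=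
          mul_nonneg (mul_nonneg (by positivity) (GA_nonneg hA)) (GB_nonneg hB)
        have hp : 0 < ‖a - b‖ := norm_pos_iff.2 hab
        have hp' : ‖a‖ - r ≠ 0 := by linarith
        have hp2 : r - ‖b‖ ≠ 0 := by linarith
        have e : (1 + ‖b‖) * (r⁻¹ ^ m * GA r (a ::ₘ A) * GB r B) +
            ‖(-1 : ℂ)‖ * ((1 + ‖a‖) * (r⁻¹ ^ m * GA r A * GB r (b ::ₘ B))) =
            (‖a‖ - ‖b‖) * (r⁻¹ ^ m * GA r (a ::ₘ A) * GB r (b ::ₘ B)) := by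
          rw [eA, eB, norm_neg, norm_one]
          field_simp
          ring
        rw [e, norm_inv, inv_mul_le_iff₀ hp]
        exact mul_le_mul_of_nonneg_right (norm_sub_norm_le a b) hG
      · intro x hx
        have := hu1 x hx
        rcases Multiset.mem_cons.1 hx with rfl | hx
        · simp [hab, this]
        · simp only [eval_add, eval_mul, eval_C, eval_sub, eval_X, hv1 x hx, this]
          field_simp
          ring
      · intro x hx
        have := hv0 x hx
        rcases Multiset.mem_cons.1 hx with rfl | hx
        · simp [this]
        · simp [this, hu0 x hx]

/-- For every radius, the key inequality. -/
theorem key_radius {n m : ℕ} (z : Fin n → ℂ) (hz : ∀ j, ‖z j‖ ≤ 1) (j0 : Fin n) (hj0 : ‖z j0‖ = 1)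
    {η : ℝ} (hη : ∀ ν, m + 1 ≤ ν → ν < m + 1 + n → ‖∑ j, z j ^ ν‖ ≤ η) (hη0 : 0 ≤ η)
    {r : ℝ} (hr : 0 < r) (hr1 : r ≤ 1) : r ^ m * ∏ j, |r - ‖z j‖| ≤ 2 ^ n * η := by
  classical
  by_cases hex : ∃ j, r = ‖z j‖
  · obtain ⟨j, hj⟩ := hex
    rw [Finset.prod_eq_zero (Finset.mem_univ j) (by rw [hj]; simp)]
    simp only [mul_zero]
    positivity
  push Not at hex
  set Z : Multiset ℂ := (Finset.univ : Finset (Fin n)).val.map z with hZ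
  set A := Z.filter fun a => r < ‖a‖ with hAdef
  set B := Z.filter fun a => ¬ r < ‖a‖ with hBdef
  have hAB : A + B = Z := Multiset.filter_add_not _ _
  have hA : ∀ a ∈ A, r < ‖a‖ := fun a ha => (Multiset.mem_filter.1 ha).2
  have hB : ∀ a ∈ B, ‖a‖ < r := by
    intro a ha
    obtain ⟨h1, h2⟩ := Multiset.mem_filter.1 ha
    obtain ⟨j, -, rfl⟩ := Multiset.mem_map.1 h1
    exact lt_of_le_of_ne (not_lt.1 h2) (hex j).symm
  obtain ⟨p, hp, hp1, hp0⟩ := stage3 hη0 hr m B A hB hA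
  have hcard : A.card + B.card = n := by
    rw [← Multiset.card_add, hAB, hZ]; simp
  have h := hp (∑ j, (Polynomial.aeval (R := ℂ) (z j)).toLinearMap) (by
    intro ν h1 h2
    simpa using hη ν h1 (by omega))
  have hsum : (∑ j, (Polynomial.aeval (R := ℂ) (z j)).toLinearMap) p = (A.card : ℂ) := by
    have e1 : (∑ j, (Polynomial.aeval (R := ℂ) (z j)).toLinearMap) p
        = (Z.map fun a => p.eval a).sum := by
      simp only [LinearMap.sum_apply, AlgHom.toLinearMap_apply, hZ, Multiset.map_map]
      simp [Finset.sum, Polynomial.aeval_def, Polynomial.eval₂_eq_eval_map]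
    rw [e1, ← hAB, Multiset.map_add, Multiset.sum_add, Multiset.map_congr rfl hp1,
      Multiset.map_congr rfl hp0]
    simp
  rw [hsum] at h
  have hr1' : r < 1 := lt_of_le_of_ne hr1 (by rw [← hj0]; exact hex j0)
  have hApos : 1 ≤ A.card := by
    apply Multiset.card_pos_iff_exists_mem.2
    exact ⟨z j0, Multiset.mem_filter.2 ⟨Multiset.mem_map.2 ⟨j0, by simp, rfl⟩, by rw [hj0]; exact hr1'⟩⟩
  have h1 : (1 : ℝ) ≤ r⁻¹ ^ m * GA r A * GB r B * η := by
    refine le_trans ?_ h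
    rw [Complex.norm_natCast]
    exact_mod_cast hApos
  have hG : GA r A * GB r B = ∏ j, (1 + ‖z j‖) / |r - ‖z j‖| := by
    have eA : GA r A = (A.map fun a => (1 + ‖a‖) / |r - ‖a‖|).prod := by
      unfold GA
      congr 1
      apply Multiset.map_congr rfl
      intro a ha
      rw [abs_sub_comm, abs_of_pos (sub_pos.2 (hA a ha))]
    have eB : GB r B = (B.map fun a => (1 + ‖a‖) / |r - ‖a‖|).prod := by
      unfold GB
      congr 1
      apply Multiset.map_congr rfl
      intro a ha
      rw [abs_of_pos (sub_pos.2 (hB a ha))]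
    rw [eA, eB, ← Multiset.prod_add, ← Multiset.map_add, hAB, hZ, Multiset.map_map]
    rfl
  rw [mul_assoc (r⁻¹ ^ m), hG, Finset.prod_div_distrib] at h1
  have hD : 0 < ∏ j, |r - ‖z j‖| :=
    Finset.prod_pos fun j _ => abs_pos.2 (sub_ne_zero.2 (hex j))
  have h2 : ∏ j, (1 + ‖z j‖) ≤ 2 ^ n := by
    calc ∏ j, (1 + ‖z j‖) ≤ ∏ j : Fin n, (2 : ℝ) :=
          Finset.prod_le_prod (fun j _ => by positivity) fun j _ => by linarith [hz j]
      _ = 2 ^ n := by simp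
  have h3 : r ^ m * ∏ j, |r - ‖z j‖| ≤ (∏ j, (1 + ‖z j‖)) * η := by
    have hrm : 0 < r ^ m := by positivity
    have e : r⁻¹ ^ m * ((∏ j, (1 + ‖z j‖)) / ∏ j, |r - ‖z j‖|) * η
        = ((∏ j, (1 + ‖z j‖)) * η) / (r ^ m * ∏ j, |r - ‖z j‖|) := by
      rw [inv_pow]
      field_simp
    rw [e, le_div_iff₀ (by positivity)] at h1
    linarith
  exact h3.trans (mul_le_mul_of_nonneg_right h2 hη0)

/-- Weighted Chebyshev estimate. -/
theorem weighted_cheb {n m : ℕ} (t : Fin n → ℝ) (α β D : ℝ) (hβ : 0 < β) (hβα : β < α)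
    (hs : α + β = 1)
    (h : ∀ r : ℝ, 0 < r → r ≤ 1 → r ^ m * ∏ j, |r - t j| ≤ D) :
    α ^ (2 * m) * (α * β) ^ n ≤ D := by
  let F : ℂ → ℂ := fun w => (α + β * w) ^ (2 * m) * ∏ j, ((α + β * w) * (α * w + β) - t j * w)
  have hF : Differentiable ℂ F := by
    show Differentiable ℂ fun w : ℂ =>
      ((α : ℂ) + β * w) ^ (2 * m) * ∏ j, ((α + β * w) * (α * w + β) - t j * w)
    fun_prop
  have hα : 0 < α := hβ.trans hβα
  have h0 : ‖F 0‖ = α ^ (2 * m) * (α * β) ^ n := by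
    simp [F, abs_of_pos hα, abs_of_pos hβ]
  rw [← h0]
  refine Complex.norm_le_of_forall_mem_frontier_norm_le (U := Metric.ball 0 1)
    Metric.isBounded_ball hF.diffContOnCl ?_ (subset_closure (by simp))
  intro w hw
  rw [frontier_ball _ one_ne_zero, mem_sphere_zero_iff_norm] at hw
  have hww : w * (starRingEnd ℂ) w = 1 := by
    rw [Complex.mul_conj, Complex.normSq_eq_norm_sq, hw]; simp
  set x : ℝ := ‖(α : ℂ) + β * w‖ ^ 2 with hx
  have hxc : (x : ℂ) = (α + β * w) * (α + β * (starRingEnd ℂ) w) := by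
    rw [hx, ← Complex.normSq_eq_norm_sq, ← Complex.mul_conj]
    simp
  have hfac : ∀ j, ‖((α : ℂ) + β * w) * (α * w + β) - t j * w‖ = |x - t j| := by
    intro j
    have : ((α : ℂ) + β * w) * (α * w + β) - t j * w = w * ((x - t j : ℝ) : ℂ) := by
      push_cast
      rw [hxc]
      linear_combination (-(α + β * w) * β) * hww
    rw [this, norm_mul, hw, one_mul, Complex.norm_real, Real.norm_eq_abs]
  have hFw : ‖F w‖ = x ^ m * ∏ j, |x - t j| := by
    simp only [F, norm_mul, norm_pow, norm_prod, hfac]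
    rw [hx, ← pow_mul]
  rw [hFw]
  have hbw : ‖(β : ℂ) * w‖ = β := by rw [norm_mul, hw]; simp [abs_of_pos hβ]
  have haw : ‖(α : ℂ)‖ = α := by simp [abs_of_pos hα]
  have hpos : 0 < ‖(α : ℂ) + β * w‖ := by
    have := norm_sub_le_norm_add (α : ℂ) (β * w)
    rw [hbw, haw] at this
    linarith
  apply h
  · positivity
  · have := norm_add_le (α : ℂ) (β * w)
    rw [hbw, haw, hs] at this
    exact pow_le_one₀ hpos.le this

theorem final_ineq (n m : ℕ) (hn : 0 < n) (hm : 0 < m) :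
    (2 : ℝ) ^ n * ((n : ℝ) / (4 * Real.exp 1 * (m + n))) ^ n ≤
      ((2 * m + n) / (2 * (m + n)) : ℝ) ^ (2 * m) *
        (((2 * m + n) / (2 * (m + n)) : ℝ) * (n / (2 * (m + n)))) ^ n := by
  have hn' : (0 : ℝ) < n := by exact_mod_cast hn
  have hm' : (0 : ℝ) < m := by exact_mod_cast hm
  set α : ℝ := (2 * m + n) / (2 * (m + n)) with hα
  have hαpos : 0 < α := by positivity
  have h1 : Real.exp (-(n / (2 * m + n))) ≤ α := by
    rw [Real.exp_neg]
    have e : α = (n / (2 * m + n) + 1 : ℝ)⁻¹ := by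
      rw [hα]; field_simp; ring
    rw [e]
    exact inv_anti₀ (by positivity) (Real.add_one_le_exp _)
  have h2 : Real.exp (-1) ^ n ≤ α ^ (2 * m + n) := by
    have := pow_le_pow_left₀ (Real.exp_pos _).le h1 (2 * m + n)
    refine le_trans (le_of_eq ?_) this
    rw [← Real.exp_nat_mul, ← Real.exp_nat_mul]
    congr 1
    push_cast
    field_simp
  have e1 : (2 : ℝ) ^ n * ((n : ℝ) / (4 * Real.exp 1 * (m + n))) ^ n =
      Real.exp (-1) ^ n * (n / (2 * (m + n))) ^ n := by
    rw [← mul_pow, ← mul_pow, Real.exp_neg]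
    congr 1
    field_simp
    norm_num
  rw [e1, mul_pow, ← mul_assoc, ← pow_add]
  exact mul_le_mul_of_nonneg_right h2 (by positivity)

theorem normalized (n m : ℕ) (hn : 0 < n) (hm : 0 < m) (z : Fin n → ℂ)
    (hz : ∀ j, ‖z j‖ ≤ 1) (j0 : Fin n) (hj0 : ‖z j0‖ = 1) :
    ∃ ν : ℕ, m < ν ∧ ν ≤ m + n ∧
      ((n : ℝ) / (4 * Real.exp 1 * (m + n))) ^ n ≤ ‖∑ j, z j ^ ν‖ := by
  have hn' : (0 : ℝ) < n := by exact_mod_cast hn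
  have hm' : (0 : ℝ) < m := by exact_mod_cast hm
  obtain ⟨ν, hν, hmax⟩ := Finset.exists_max_image (Finset.Icc (m + 1) (m + n))
    (fun ν => ‖∑ j, z j ^ ν‖) ⟨m + 1, by simp <;> omega⟩
  rw [Finset.mem_Icc] at hν
  refine ⟨ν, by omega, hν.2, ?_⟩
  have h1 := weighted_cheb (m := m) (fun j => ‖z j‖) ((2 * m + n) / (2 * (m + n)))
    (n / (2 * (m + n))) (2 ^ n * ‖∑ j, z j ^ ν‖) (by positivity)
    (by gcongr; linarith) (by field_simp; ring)
    (fun r hr hr1 => key_radius z hz j0 hj0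
      (fun μ h1 h2 => hmax μ (Finset.mem_Icc.2 ⟨h1, by omega⟩)) (norm_nonneg _) hr hr1)
  have h2 := (final_ineq n m hn hm).trans h1
  exact le_of_mul_le_mul_left h2 (by positivity)

/-- Kolesnik–Straus form of Turán's second main theorem. -/
theorem power_sum_second_main_theorem
    (n m : ℕ) (hn : 0 < n) (hm : 0 < m) (z : Fin n → ℂ)
    (hmax : ∀ j, ‖z j‖ ≤ ‖z ⟨0, hn⟩‖) :
    ∃ ν : ℕ, m < ν ∧ ν ≤ m + n ∧
      ‖∑ j, z j ^ ν‖ ≥ ‖z ⟨0, hn⟩‖ ^ ν * ((n : ℝ) / (4 * Real.exp 1 * (m + n))) ^ n := by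
  by_cases h0 : z ⟨0, hn⟩ = 0
  · refine ⟨m + 1, by omega, by omega, ?_⟩
    rw [h0]
    simp
  have hp : 0 < ‖z ⟨0, hn⟩‖ := norm_pos_iff.2 h0
  obtain ⟨ν, h1, h2, h3⟩ := normalized n m hn hm (fun j => z j / z ⟨0, hn⟩)
    (fun j => by rw [norm_div]; exact (div_le_one hp).2 (hmax j)) ⟨0, hn⟩ (by simp [h0])
  refine ⟨ν, h1, h2, ?_⟩
  simp only [div_pow] at h3
  rw [← Finset.sum_div, norm_div, norm_pow, le_div_iff₀ (by positivity)] at h3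
  rw [div_pow, ge_iff_le, mul_comm]
  exact h3
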